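/- In every drawing of the complete bipartite graph K_{3,5} in the plane, the number of unordered pairs of distinct edges that cross each other is at least 4 (i.e., cr(K_{3,5}) ≥ 4). -/

import Mathlib

/-!
The proof counts copies of `K_{3,3}`. If every drawing of `K_{3,3}` has two vertex-disjoint edges
that cross, then among any three of the five vertices on the large side of `K_{3,5}` there are
two that are the endpoints of crossing disjoint edges. The graph on five vertices formed by these
pairs meets each of the ten triples, and each pair lies in three triples, so it has at least
`10 / 3`, hence at least four, edges; distinct pairs come from distinct crossings.

For `K_{3,3}` (`no_disjoint_K33`) the plane is identified with `ℂ`. Suppose that disjoint edges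
`γ i j` (from `P i` to `Q j`) and `γ k l` never meet. Then `(s, t) ↦ γ i j s - γ k l t` is a
nonvanishing map on `ℝ × ℝ`, so it has a continuous logarithm (`exists_continuous_log`), and the
increments of this logarithm around the unit square add up to zero. Each side of the square
records the variation of the logarithm of the difference between a fixed vertex and a moving point
of an edge. After fixing logarithms of the differences of all pairs of vertices, each such
variation is described by an integer, and the square gives a linear relation among four of these
integers, with an inhomogeneous term coming from `log (-z) = log z ± π i`. Summing the relations
over all 18 pairs of disjoint edges, every integer appears twice, while the inhomogeneous terms
add up to an odd number, a contradiction. This is the van Kampen obstruction for `K_{3,3}`.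
-/

open Set

/-- A drawing of a simple graph `G` in the plane: an injective placement of vertices
together with, for each edge, a continuous injective curve between the points of its
endpoints, whose interior avoids all vertex points; any two distinct edge curves meet in
finitely many points, and no point lies in the interiors of three distinct edge curves. -/
structure Drawing {V : Type*} (G : SimpleGraph V) where
  pos : V → ℝ × ℝ
  pos_inj : Function.Injective pos
  curve : G.edgeSet → ℝ → ℝ × ℝ
  curve_cont : ∀ e, ContinuousOn (curve e) (Icc 0 1)
  curve_inj : ∀ e, InjOn (curve e) (Icc 0 1)
  curve_ends : ∀ e : G.edgeSet, ∃ a b : V, (e : Sym2 V) = s(a, b) ∧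
      curve e 0 = pos a ∧ curve e 1 = pos b
  interior_no_vertex : ∀ e, ∀ t ∈ Ioo (0 : ℝ) 1, ∀ v, curve e t ≠ pos v
  finite_meet : ∀ e f, e ≠ f → (curve e '' Icc 0 1 ∩ curve f '' Icc 0 1).Finite
  no_triple_point : ∀ p : ℝ × ℝ, ∀ e f g, e ≠ f → e ≠ g → f ≠ g →
      p ∈ curve e '' Ioo 0 1 → p ∈ curve f '' Ioo 0 1 → p ∈ curve g '' Ioo 0 1 → False

/-- Two edges cross in a drawing if some point lies in the interiors of both curves. -/
def Drawing.Crosses {V : Type*} {G : SimpleGraph V} (D : Drawing G) (e f : G.edgeSet) : Prop :=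
  e ≠ f ∧ ∃ p : ℝ × ℝ, p ∈ D.curve e '' Ioo 0 1 ∧ p ∈ D.curve f '' Ioo 0 1

/-- A drawing is almost planar (1-planar) if every edge crosses at most one other edge. -/
def Drawing.IsAlmostPlanar {V : Type*} {G : SimpleGraph V} (D : Drawing G) : Prop :=
  ∀ e f g, D.Crosses e f → D.Crosses e g → f = g

/-- A graph is almost planar if it admits a drawing in which every edge crosses at most
one other edge. -/
def SimpleGraph.AlmostPlanar {V : Type*} (G : SimpleGraph V) : Prop :=
  ∃ D : Drawing G, D.IsAlmostPlanar

/-! ### Continuous logarithms -/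

lemma exists_continuous_log {A : Type*} [TopologicalSpace A] [SimplyConnectedSpace A]
    [LocallyPathConnectedSpace A] [Nonempty A] (g : A → ℂ) :
    ∃ L : A → ℂ, Continuous g → (∀ x, g x ≠ 0) → Continuous L ∧ ∀ x, Complex.exp (L x) = g x := by
  by_cases hg : Continuous g ∧ ∀ x, g x ≠ 0
  · obtain ⟨a⟩ := ‹Nonempty A›
    obtain ⟨F, ⟨-, hF⟩, -⟩ := Complex.isCoveringMapOn_exp.existsUnique_continuousMap_lifts
      ⟨g, hg.1⟩ (a₀ := a) (e₀ := Complex.log (g a)) (Complex.exp_log (hg.2 a)) hg.2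
    exact ⟨F, fun _ _ => ⟨F.continuous, fun x => congrFun hF x⟩⟩
  · exact ⟨0, fun h1 h2 => absurd ⟨h1, h2⟩ hg⟩

/-- The variation of a continuous logarithm depends only on the function up to a constant
factor. -/
lemma log_increment_unique {L L' : ℝ → ℂ} (hL : Continuous L) (hL' : Continuous L') (c : ℂ)
    (h : ∀ t, Complex.exp (L t) = c * Complex.exp (L' t)) : L 1 - L 0 = L' 1 - L' 0 := by
  have hu := Complex.isCoveringMapOn_exp.existsUnique_continuousMap_lifts
    (⟨fun t => Complex.exp (L t), by fun_prop⟩ : C(ℝ, ℂ)) (a₀ := 0) (e₀ := L 0) rfl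
    (fun t => Complex.exp_ne_zero _)
  have key := hu.unique (y₁ := ⟨L, hL⟩) (y₂ := ⟨fun t => L' t + (L 0 - L' 0), by fun_prop⟩)
    ⟨rfl, rfl⟩ ⟨by simp, ?_⟩
  · have := DFunLike.congr_fun key 1
    simp only [ContinuousMap.coe_mk] at this
    rw [this]; ring
  · funext t
    have hc : Complex.exp (L 0 - L' 0) = c := by
      rw [Complex.exp_sub, h 0, mul_div_cancel_right₀ _ (Complex.exp_ne_zero _)]
    simp only [Function.comp_apply, ContinuousMap.coe_mk]
    rw [Complex.exp_add, hc, h t, mul_comm]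

/-! ### Nonplanarity of `K_{3,3}` -/

/-- A logarithm of `p i - p k`, chosen so that swapping `i` and `k` changes it by exactly `π i`
with a sign determined by the order of the indices. -/
noncomputable def pairLog (p : Fin 3 → ℂ) (i k : Fin 3) : ℂ :=
  if i < k then Complex.log (p i - p k) else Complex.log (p k - p i) + Real.pi * Complex.I

/-- The sign in the antisymmetry relation `pairLog_sub_swap`. -/
def pairSign (i k : Fin 3) : ℤ := if i < k then -1 else 1

lemma exp_pairLog {p : Fin 3 → ℂ} {i k : Fin 3} (h : p i ≠ p k) :
    Complex.exp (pairLog p i k) = p i - p k := by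
  unfold pairLog
  split_ifs
  · exact Complex.exp_log (sub_ne_zero.2 h)
  · rw [Complex.exp_add, Complex.exp_log (sub_ne_zero.2 h.symm), Complex.exp_pi_mul_I]
    ring

lemma pairLog_sub_swap (p : Fin 3 → ℂ) {i k : Fin 3} (h : i ≠ k) :
    pairLog p i k - pairLog p k i = pairSign i k * (Real.pi * Complex.I) := by
  unfold pairLog pairSign
  rcases lt_or_gt_of_ne h with h | h
  · simp [h, h.not_gt]
  · simp [h, h.not_gt]

/-- The integer system produced by a drawing of `K_{3,3}` in which disjoint edges do not meet has
no solution, because the sum of the 18 equations is inconsistent modulo 4. -/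
lemma no_integer_solution (u v : Fin 3 → Fin 3 → Fin 3 → ℤ)
    (h : ∀ i j k l, i ≠ k → j ≠ l →
      2 * (u i k l + v l i j - u k i j - v j k l) = pairSign i k + pairSign l j) : False := by
  have h1 : ∀ j l, j ≠ l →
      2 * (u 0 1 l + v l 0 j - u 1 0 j - v j 1 l) = -1 + pairSign l j :=
    fun j l hj => h 0 j 1 l (by decide) hj
  have h2 : ∀ j l, j ≠ l →
      2 * (u 0 2 l + v l 0 j - u 2 0 j - v j 2 l) = -1 + pairSign l j :=
    fun j l hj => h 0 j 2 l (by decide) hj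
  have h3 : ∀ j l, j ≠ l →
      2 * (u 1 2 l + v l 1 j - u 2 1 j - v j 2 l) = -1 + pairSign l j :=
    fun j l hj => h 1 j 2 l (by decide) hj
  have s01 : pairSign 0 1 = -1 := rfl
  have s02 : pairSign 0 2 = -1 := rfl
  have s12 : pairSign 1 2 = -1 := rfl
  have s10 : pairSign 1 0 = 1 := rfl
  have s20 : pairSign 2 0 = 1 := rfl
  have s21 : pairSign 2 1 = 1 := rfl
  have e1 := h1 0 1 (by decide)
  have e2 := h1 1 0 (by decide)
  have e3 := h1 0 2 (by decide)
  have e4 := h1 2 0 (by decide)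
  have e5 := h1 1 2 (by decide)
  have e6 := h1 2 1 (by decide)
  have f1 := h2 0 1 (by decide)
  have f2 := h2 1 0 (by decide)
  have f3 := h2 0 2 (by decide)
  have f4 := h2 2 0 (by decide)
  have f5 := h2 1 2 (by decide)
  have f6 := h2 2 1 (by decide)
  have g1 := h3 0 1 (by decide)
  have g2 := h3 1 0 (by decide)
  have g3 := h3 0 2 (by decide)
  have g4 := h3 2 0 (by decide)
  have g5 := h3 1 2 (by decide)
  have g6 := h3 2 1 (by decide)
  omega

/-- A form of the nonplanarity of `K_{3,3}` that allows adjacent edges to meet: the curves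
of some two vertex-disjoint edges intersect. -/
theorem no_disjoint_K33 (P Q : Fin 3 → ℂ) (γ : Fin 3 → Fin 3 → ℝ → ℂ)
    (hc : ∀ i j, Continuous (γ i j)) (h0 : ∀ i j, γ i j 0 = P i) (h1 : ∀ i j, γ i j 1 = Q j)
    (hd : ∀ i j k l, i ≠ k → j ≠ l → ∀ s t, γ i j s ≠ γ k l t) : False := by
  have other : ∀ i : Fin 3, ∃ k, k ≠ i := by decide
  have hPγ : ∀ i k l, i ≠ k → ∀ t, P i - γ k l t ≠ 0 := by
    intro i k l hik t
    obtain ⟨j, hj⟩ := other l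
    rw [← h0 i j]
    exact sub_ne_zero.2 (hd i j k l hik hj 0 t)
  have hγQ : ∀ j k l, j ≠ l → ∀ t, γ k l t - Q j ≠ 0 := by
    intro j k l hjl t
    obtain ⟨i, hi⟩ := other k
    rw [← h1 i j]
    exact sub_ne_zero.2 (hd k l i j hi.symm hjl.symm t 1)
  have hPQ : ∀ i j, P i - Q j ≠ 0 := by
    intro i j
    obtain ⟨k, hk⟩ := other i
    rw [← h1 k j]
    exact hPγ i k j hk.symm 1
  have hPP : ∀ i k, i ≠ k → P i ≠ P k := by
    intro i k hik
    have := hPγ i k 0 hik 0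
    rwa [h0, sub_ne_zero] at this
  have hQQ : ∀ j l, j ≠ l → Q l ≠ Q j := by
    intro j l hjl
    have := hγQ j 0 l hjl 1
    rwa [h1, sub_ne_zero] at this
  choose U hU using fun i k l => exists_continuous_log (fun t : ℝ => P i - γ k l t)
  choose V hV using fun j k l => exists_continuous_log (fun t : ℝ => γ k l t - Q j)
  replace hU := fun i k l (h : i ≠ k) =>
    hU i k l (continuous_const.sub (hc k l)) (hPγ i k l h)
  replace hV := fun j k l (h : j ≠ l) =>
    hV j k l ((hc k l).sub continuous_const) (hγQ j k l h)
  -- The four sides of the square belonging to a pair of disjoint edges.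
  have square : ∀ i j k l, i ≠ k → j ≠ l →
      (U i k l 1 - U i k l 0) + (V l i j 1 - V l i j 0)
        = (U k i j 1 - U k i j 0) + (V j k l 1 - V j k l 0) := by
    intro i j k l hik hjl
    have hci := hc i j
    have hck := hc k l
    obtain ⟨L, hL⟩ := exists_continuous_log (fun x : ℝ × ℝ => γ i j x.1 - γ k l x.2)
    obtain ⟨Lc, Le⟩ := hL (by fun_prop) (fun x => sub_ne_zero.2 (hd i j k l hik hjl _ _))
    have a1 : L (0, 1) - L (0, 0) = U i k l 1 - U i k l 0 :=
      log_increment_unique (L := fun t => L (0, t)) (by fun_prop) (hU i k l hik).1 1 fun t => by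
        rw [Le, (hU i k l hik).2, one_mul, h0]
    have a2 : L (1, 1) - L (1, 0) = V j k l 1 - V j k l 0 :=
      log_increment_unique (L := fun t => L (1, t)) (by fun_prop) (hV j k l hjl).1 (-1) fun t => by
        rw [Le, (hV j k l hjl).2, h1]; ring
    have a3 : L (1, 0) - L (0, 0) = U k i j 1 - U k i j 0 :=
      log_increment_unique (L := fun t => L (t, 0)) (by fun_prop) (hU k i j hik.symm).1 (-1)
        fun t => by rw [Le, (hU k i j hik.symm).2, h0]; ring
    have a4 : L (1, 1) - L (0, 1) = V l i j 1 - V l i j 0 :=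
      log_increment_unique (L := fun t => L (t, 1)) (by fun_prop) (hV l i j hjl.symm).1 1
        fun t => by rw [Le, (hV l i j hjl.symm).2, h1, one_mul]
    rw [← a1, ← a2, ← a3, ← a4]; ring
  have hu : ∀ i k l, ∃ n : ℤ, i ≠ k → U i k l 1 - U i k l 0 =
      Complex.log (P i - Q l) - pairLog P i k + n * (2 * Real.pi * Complex.I) := by
    intro i k l
    by_cases h : i = k
    · exact ⟨0, fun h' => absurd h h'⟩
    · obtain ⟨n, hn⟩ := Complex.exp_eq_exp_iff_exists_int.1
        (show Complex.exp (U i k l 1 - U i k l 0) =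
          Complex.exp (Complex.log (P i - Q l) - pairLog P i k) by
          rw [Complex.exp_sub, Complex.exp_sub, (hU i k l h).2, (hU i k l h).2, h0, h1,
            Complex.exp_log (hPQ i l), exp_pairLog (hPP i k h)])
      exact ⟨n, fun _ => hn⟩
  have hv : ∀ j k l, ∃ n : ℤ, j ≠ l → V j k l 1 - V j k l 0 =
      pairLog Q l j - Complex.log (P k - Q j) + n * (2 * Real.pi * Complex.I) := by
    intro j k l
    by_cases h : j = l
    · exact ⟨0, fun h' => absurd h h'⟩
    · obtain ⟨n, hn⟩ := Complex.exp_eq_exp_iff_exists_int.1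
        (show Complex.exp (V j k l 1 - V j k l 0) =
          Complex.exp (pairLog Q l j - Complex.log (P k - Q j)) by
          rw [Complex.exp_sub, Complex.exp_sub, (hV j k l h).2, (hV j k l h).2, h0, h1,
            Complex.exp_log (hPQ k j), exp_pairLog (hQQ j l h)])
      exact ⟨n, fun _ => hn⟩
  choose u hu using hu
  choose v hv using hv
  refine no_integer_solution u v fun i j k l hik hjl => ?_
  have hsq := square i j k l hik hjl
  rw [hu i k l hik, hv l i j hjl.symm, hu k i j hik.symm, hv j k l hjl] at hsq
  have d1 := pairLog_sub_swap P hik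
  have d2 := pairLog_sub_swap Q hjl.symm
  have hpi : (Real.pi * Complex.I : ℂ) ≠ 0 :=
    mul_ne_zero (Complex.ofReal_ne_zero.2 Real.pi_ne_zero) Complex.I_ne_zero
  have : ((2 * (u i k l + v l i j - u k i j - v j k l) : ℤ) : ℂ) =
      ((pairSign i k + pairSign l j : ℤ) : ℂ) := by
    apply mul_right_cancel₀ hpi
    push_cast
    linear_combination hsq + d1 + d2
  exact_mod_cast this

/-! ### Crossings in drawings of `K_{3,5}` -/

/-- The edge of `K_{3,5}` joining `i` and `j`. -/
def bipEdge (i : Fin 3) (j : Fin 5) : (completeBipartiteGraph (Fin 3) (Fin 5)).edgeSet :=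
  ⟨s(Sum.inl i, Sum.inr j), by simp⟩

lemma bipEdge_inj {i k : Fin 3} {j l : Fin 5} (h : bipEdge i j = bipEdge k l) :
    i = k ∧ j = l := by
  simpa [bipEdge] using h

/-- Each edge curve, oriented from the small side to the large side and extended to be constant
outside the unit interval, so that it is continuous on all of `ℝ`. -/
lemma exists_oriented_curve (D : Drawing (completeBipartiteGraph (Fin 3) (Fin 5)))
    (i : Fin 3) (j : Fin 5) : ∃ c : ℝ → ℝ × ℝ, Continuous c ∧ c 0 = D.pos (Sum.inl i) ∧
      c 1 = D.pos (Sum.inr j) ∧ ∀ t, c t ∈ D.curve (bipEdge i j) '' Icc 0 1 := by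
  set e := bipEdge i j
  have hcont : Continuous fun t : ℝ => D.curve e (projIcc (0 : ℝ) 1 zero_le_one t) :=
    (continuousOn_iff_continuous_domRestrict.1 (D.curve_cont e)).comp continuous_projIcc
  obtain ⟨a, b, hab, ha, hb⟩ := D.curve_ends e
  have hab' : s(Sum.inl i, Sum.inr j) = s(a, b) := hab
  rcases Sym2.eq_iff.1 hab' with ⟨rfl, rfl⟩ | ⟨rfl, rfl⟩
  · exact ⟨_, hcont, by simpa using ha, by simpa using hb,
      fun t => mem_image_of_mem _ (Subtype.property _)⟩
  · exact ⟨_, hcont.comp (continuous_const.sub continuous_id : Continuous fun t : ℝ => 1 - t),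
      by simpa using hb, by simpa using ha,
      fun t => mem_image_of_mem _ (Subtype.property _)⟩

/-- A point of an edge curve is an interior point or one of the two vertices of the edge. -/
lemma mem_curve_cases (D : Drawing (completeBipartiteGraph (Fin 3) (Fin 5)))
    {i : Fin 3} {j : Fin 5} {p : ℝ × ℝ} (h : p ∈ D.curve (bipEdge i j) '' Icc 0 1) :
    p ∈ D.curve (bipEdge i j) '' Ioo 0 1 ∨ p = D.pos (Sum.inl i) ∨ p = D.pos (Sum.inr j) := by
  obtain ⟨t, ht, rfl⟩ := h
  obtain ⟨a, b, hab, ha, hb⟩ := D.curve_ends (bipEdge i j)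
  have hab' : s(Sum.inl i, Sum.inr j) = s(a, b) := hab
  rcases eq_endpoints_or_mem_Ioo_of_mem_Icc ht with rfl | rfl | ht
  · rcases Sym2.eq_iff.1 hab' with ⟨rfl, rfl⟩ | ⟨rfl, rfl⟩ <;> simp [ha]
  · rcases Sym2.eq_iff.1 hab' with ⟨rfl, rfl⟩ | ⟨rfl, rfl⟩ <;> simp [hb]
  · exact Or.inl (mem_image_of_mem _ ht)

/-- Disjoint edges whose curves meet must cross, as neither curve passes through a vertex of the
other edge. -/
lemma crosses_of_meet (D : Drawing (completeBipartiteGraph (Fin 3) (Fin 5)))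
    {i k : Fin 3} {j l : Fin 5} (hik : i ≠ k) (hjl : j ≠ l) {p : ℝ × ℝ}
    (h : p ∈ D.curve (bipEdge i j) '' Icc 0 1) (h' : p ∈ D.curve (bipEdge k l) '' Icc 0 1) :
    D.Crosses (bipEdge i j) (bipEdge k l) := by
  refine ⟨fun he => hik (bipEdge_inj he).1, p, ?_⟩
  have no : ∀ {i j v}, p ∈ D.curve (bipEdge i j) '' Ioo 0 1 → p ≠ D.pos v := by
    rintro i j v ⟨t, ht, rfl⟩
    exact D.interior_no_vertex _ t ht v
  rcases mem_curve_cases D h with h | h | h <;> rcases mem_curve_cases D h' with h' | h' | h'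
  · exact ⟨h, h'⟩
  · exact absurd h' (no h)
  · exact absurd h' (no h)
  · exact absurd h (no h')
  · exact absurd (D.pos_inj (h.symm.trans h')) (by simpa using hik)
  · exact absurd (D.pos_inj (h.symm.trans h')) (by simp)
  · exact absurd h (no h')
  · exact absurd (D.pos_inj (h.symm.trans h')) (by simp)
  · exact absurd (D.pos_inj (h.symm.trans h')) (by simpa using hjl)

lemma exists_crossing_in_triple (D : Drawing (completeBipartiteGraph (Fin 3) (Fin 5)))
    (f : Fin 3 → Fin 5) (hf : Function.Injective f) :
    ∃ i k j l, i ≠ k ∧ j ≠ l ∧ D.Crosses (bipEdge i (f j)) (bipEdge k (f l)) := by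
  by_contra! hno
  choose c hc h0 h1 hm using exists_oriented_curve D
  let φ := Complex.equivRealProdCLM.symm
  refine no_disjoint_K33 (fun i => φ (D.pos (Sum.inl i))) (fun j => φ (D.pos (Sum.inr (f j))))
    (fun i j t => φ (c i (f j) t)) (fun i j => φ.continuous.comp (hc i (f j)))
    (fun i j => by simp only [h0]) (fun i j => by simp only [h1])
    fun i j k l hik hjl s t heq => hno i k j l hik hjl ?_
  have heq := φ.injective heq
  exact crosses_of_meet D hik (hf.ne hjl) (hm i (f j) s) (heq ▸ hm k (f l) t)

/-- Vertices `j` and `l` on the large side are linked if some two disjoint edges, one at each of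
them, cross. -/
def Linked (D : Drawing (completeBipartiteGraph (Fin 3) (Fin 5))) (j l : Fin 5) : Prop :=
  ∃ i k, i ≠ k ∧ D.Crosses (bipEdge i j) (bipEdge k l)

lemma Linked.symm {D : Drawing (completeBipartiteGraph (Fin 3) (Fin 5))} {j l : Fin 5}
    (h : Linked D j l) : Linked D l j := by
  obtain ⟨i, k, hik, hne, p, h1, h2⟩ := h
  exact ⟨k, i, hik.symm, hne.symm, p, h2, h1⟩

lemma linked_of_lt (D : Drawing (completeBipartiteGraph (Fin 3) (Fin 5))) {a b c : Fin 5}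
    (hab : a < b) (hbc : b < c) : Linked D a b ∨ Linked D a c ∨ Linked D b c := by
  have hf : StrictMono ![a, b, c] := by
    rw [Fin.strictMono_iff_lt_succ]
    intro i
    fin_cases i
    exacts [hab, hbc]
  obtain ⟨i, k, j, l, hik, hjl, hx⟩ := exists_crossing_in_triple D ![a, b, c] hf.injective
  have hL : Linked D (![a, b, c] j) (![a, b, c] l) := ⟨i, k, hik, hx⟩
  have hL' := hL.symm
  fin_cases j <;> fin_cases l <;> simp_all

open Classical in
/-- A graph on five vertices that meets every triple has at least four edges. -/
lemma four_le_card_of_triples (r : Fin 5 → Fin 5 → Prop)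
    (h : ∀ a b c, a < b → b < c → r a b ∨ r a c ∨ r b c) :
    4 ≤ (Finset.univ.filter fun q : Fin 5 × Fin 5 => q.1 < q.2 ∧ r q.1 q.2).card := by
  have hs : ∀ a b c, a < b → b < c →
      1 ≤ (if r a b then 1 else 0) + (if r a c then 1 else 0) + (if r b c then 1 else 0) := by
    intro a b c hab hbc
    rcases h a b c hab hbc with h | h | h <;> simp [h] <;> omega
  generalize hg : (fun a b => if r a b then 1 else 0 : Fin 5 → Fin 5 → ℕ) = g
  have hg' : ∀ a b, (if r a b then 1 else 0) = g a b := fun a b => by rw [← hg]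
  have h012 := hs 0 1 2 (by decide) (by decide)
  have h013 := hs 0 1 3 (by decide) (by decide)
  have h014 := hs 0 1 4 (by decide) (by decide)
  have h023 := hs 0 2 3 (by decide) (by decide)
  have h024 := hs 0 2 4 (by decide) (by decide)
  have h034 := hs 0 3 4 (by decide) (by decide)
  have h123 := hs 1 2 3 (by decide) (by decide)
  have h124 := hs 1 2 4 (by decide) (by decide)
  have h134 := hs 1 3 4 (by decide) (by decide)
  have h234 := hs 2 3 4 (by decide) (by decide)
  rw [Finset.card_filter, Fintype.sum_prod_type]
  simp only [ite_and, hg'] at *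
  simp [Fin.sum_univ_five]
  omega

/-- In every drawing of `K_{3,5}` in the plane, at least `4` unordered pairs of distinct
edges cross each other. -/
theorem crossing_K35 (D : Drawing (completeBipartiteGraph (Fin 3) (Fin 5))) :
    4 ≤ {q : Sym2 (completeBipartiteGraph (Fin 3) (Fin 5)).edgeSet |
        ∃ e f, q = s(e, f) ∧ D.Crosses e f}.ncard := by
  classical
  have hcount := four_le_card_of_triples (Linked D) fun a b c => linked_of_lt D
  refine hcount.trans ?_
  rw [← Set.ncard_coe_finset]
  have hex : ∀ q : Fin 5 × Fin 5, ∃ x : Fin 3 × Fin 3, Linked D q.1 q.2 →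
      D.Crosses (bipEdge x.1 q.1) (bipEdge x.2 q.2) := by
    intro q
    by_cases h : Linked D q.1 q.2
    · obtain ⟨i, k, -, hx⟩ := h
      exact ⟨(i, k), fun _ => hx⟩
    · exact ⟨(0, 0), fun h' => absurd h' h⟩
  choose x hx using hex
  refine Set.ncard_le_ncard_of_injOn
    (fun q => s(bipEdge (x q).1 q.1, bipEdge (x q).2 q.2)) ?_ ?_ (Set.toFinite _)
  · intro q hq
    simp only [Finset.coe_filter, Finset.mem_univ, true_and, Set.mem_ofPred_eq] at hq
    exact ⟨_, _, rfl, hx q hq.2⟩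
  · intro q hq q' hq' heq
    simp only [Finset.coe_filter, Finset.mem_univ, true_and, Set.mem_ofPred_eq] at hq hq'
    rcases Sym2.eq_iff.1 heq with ⟨h1, h2⟩ | ⟨h1, h2⟩
    · exact Prod.ext (bipEdge_inj h1).2 (bipEdge_inj h2).2
    -- The swapped matching would reverse the order of the two large-side vertices.
    · have e1 := (bipEdge_inj h1).2
      have e2 := (bipEdge_inj h2).2
      exact absurd hq'.1 (by rw [← e1, ← e2]; exact not_lt.2 hq.1.le)
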